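/- Let q be a positive integer, λ̲ ≤ λ̄ componentwise in ℝ^q, and Λ = {λ ∈ ℝ^q : λ̲ ≤ λ ≤ λ̄ componentwise}. Let g : ℝ^q → ℝ^q be continuous on Λ and monotone with respect to the componentwise order on Λ (i.e., for all λ, μ ∈ Λ with λ ≤ μ componentwise, g(λ) ≤ g(μ) componentwise). Assume for every i ∈ {1,…,q}: g_i evaluated at the point whose i-th coordinate is λ̲_i and whose j-th coordinate is λ̄_j for all j ≠ i is ≤ 0, and g_i evaluated at the point whose i-th coordinate is λ̄_i and whose j-th coordinate is λ̲_j for all j ≠ i is ≥ 0. Then there exists λ* ∈ Λ with g(λ*) = 0. -/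

import Mathlib

/-!
A point of the face `x i = L i` lies below the corner with `i`-th coordinate `L i` and all other
coordinates maximal, so monotonicity spreads the sign of `g · i` from that corner to the whole
face, and likewise on `x i = U i`. What remains is the Poincaré–Miranda theorem.

Triangulate a fine grid on the box by Kuhn's triangulation, and let `f i` take the value `N` where
`g · i` is positive and `0` elsewhere, adjusted so that `f i` is the `i`-th grid coordinate on the
two faces orthogonal to direction `i`. The signed volume of the image of a simplex under `f` is a
null Lagrangian: changing `f i` by a function vanishing on those two faces changes it by a
coboundary whose primitive vanishes on the boundary, so by the discrete Stokes theorem the total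
volume does not change. It is therefore the same as for the identity map, hence nonzero, and some
small simplex has an image of nonzero volume. No `f i` is constant on the vertices of that
simplex, so on them every component of `g` takes both a nonpositive and a nonnegative value. Uniform
continuity makes `g` small nearby, and compactness gives a zero.
-/

open Equiv Finset

section KuhnTriangulation

variable {n N : ℕ} {M : Type*} [AddCommGroup M]

/-- The simplex of Kuhn's triangulation of the grid with base corner `v` and order `τ`. Its
vertices form a path from `v` to the opposite corner `v + 1` of the unit cube, and `τ i` is the
step at which coordinate `i` is raised. -/
def kuhnSimplex (τ : Perm (Fin n)) (v : Fin n → ℕ) (m : Fin (n + 1)) : Fin n → ℕ :=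
  fun i => v i + if (τ i).castSucc < m then 1 else 0

lemma le_kuhnSimplex (τ : Perm (Fin n)) (v : Fin n → ℕ) (m : Fin (n + 1)) :
    v ≤ kuhnSimplex τ v m :=
  fun _ => Nat.le_add_right _ _

lemma kuhnSimplex_le (τ : Perm (Fin n)) (v : Fin n → ℕ) (m : Fin (n + 1)) :
    kuhnSimplex τ v m ≤ v + 1 :=
  fun _ => Nat.add_le_add_left (by split_ifs <;> simp) _

lemma removeNth_castSucc_succ_kuhnSimplex_swap (k : Fin n) (τ : Perm (Fin (n + 1)))
    (v : Fin (n + 1) → ℕ) :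
    k.succ.castSucc.removeNth (kuhnSimplex (swap k.castSucc k.succ * τ) v) =
      k.succ.castSucc.removeNth (kuhnSimplex τ v) := by
  ext j i
  have hj : k.succ.castSucc.succAbove j ≠ k.succ.castSucc := Fin.succAbove_ne _ _
  generalize hx : k.succ.castSucc.succAbove j = x at hj
  have hiff : (swap k.castSucc k.succ (τ i)).castSucc < x ↔ (τ i).castSucc < x := by
    rw [swap_apply_def]
    split_ifs with h h <;> simp only [h, Fin.lt_def, ne_eq, Fin.ext_iff, Fin.val_castSucc,
      Fin.val_succ] at hj ⊢ <;> omega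
  simp only [Fin.removeNth_apply, hx, kuhnSimplex, Perm.mul_apply, hiff]

lemma removeNth_zero_kuhnSimplex_finRotate (τ : Perm (Fin (n + 1))) (v : Fin (n + 1) → ℕ) :
    Fin.removeNth 0 (kuhnSimplex (finRotate (n + 1) * τ) v) =
      (Fin.last _).removeNth (kuhnSimplex τ (v + Pi.single (τ.symm (Fin.last n)) 1)) := by
  ext j i
  simp only [Fin.removeNth_apply, Fin.zero_succAbove, Fin.succAbove_last, kuhnSimplex,
    Perm.mul_apply, Fin.castSucc_lt_succ_iff, Fin.castSucc_lt_castSucc_iff, Pi.add_apply]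
  obtain rfl | hi := eq_or_ne i (τ.symm (Fin.last n))
  · simp [Fin.not_lt.mpr (Fin.le_last j)]
  · have hlast : τ i ≠ Fin.last n := fun h => hi (by rw [← h, symm_apply_apply])
    have hiff : finRotate (n + 1) (τ i) ≤ j ↔ τ i < j := by
      rw [Fin.le_def, coe_finRotate_of_ne_last hlast, Fin.lt_def, Nat.succ_le_iff]
    simp only [hiff, Pi.single_eq_of_ne hi, add_zero]

lemma removeNth_last_kuhnSimplex_apply (τ : Perm (Fin (n + 1))) (v : Fin (n + 1) → ℕ)
    (j : Fin (n + 1)) :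
    (Fin.last _).removeNth (kuhnSimplex τ v) j (τ.symm (Fin.last n)) =
      v (τ.symm (Fin.last n)) := by
  simp [Fin.removeNth_apply, kuhnSimplex, Fin.not_lt.mpr (Fin.le_last j)]

/-- The base corners of the unit cubes that subdivide the cube `[0, N]ⁿ`, which index the cubes of
Kuhn's triangulation. -/
def baseCorners (n N : ℕ) : Finset (Fin n → ℕ) := Fintype.piFinset fun _ => range N

lemma mem_baseCorners {v : Fin n → ℕ} : v ∈ baseCorners n N ↔ ∀ i, v i < N := by
  simp [baseCorners]

lemma card_baseCorners : #(baseCorners n N) = N ^ n := by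
  simp [baseCorners]

lemma sum_baseCorners_add_single (i : Fin n) (H : (Fin n → ℕ) → M)
    (h₀ : ∀ v, v i = 0 → H v = 0) (hN : ∀ v, v i = N → H v = 0) :
    ∑ v ∈ baseCorners n N, H (v + Pi.single i 1) = ∑ v ∈ baseCorners n N, H v := by
  refine sum_bij_ne_zero (fun v _ _ => v + Pi.single i 1) (fun v hv hne => ?_)
    (fun _ _ _ _ _ _ h => add_right_cancel h) (fun w hw hne => ?_) (fun _ _ _ => rfl)
  · rw [mem_baseCorners] at hv ⊢
    intro j
    obtain rfl | hj := eq_or_ne j i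
    · have : v j + 1 ≠ N := fun h => hne (hN _ (by simpa using h))
      have := hv j
      simp only [Pi.add_apply, Pi.single_eq_same]
      omega
    · simpa [hj] using hv j
  · have hwi : w i ≠ 0 := fun h => hne (h₀ _ h)
    have hsub : w - Pi.single i 1 + Pi.single i 1 = w :=
      tsub_add_cancel_of_le
      (update_le_iff.mpr ⟨Nat.one_le_iff_ne_zero.mpr hwi, fun _ _ => Nat.zero_le _⟩)
    refine ⟨w - Pi.single i 1, ?_, by rwa [hsub], hsub⟩
    rw [mem_baseCorners] at hw ⊢
    exact fun j => (Nat.sub_le _ _).trans_lt (hw j)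

/-- Evaluation of an `n`-cochain on Kuhn's triangulation of `[0, N]ⁿ`, each simplex being oriented
by the sign of its order. -/
def kuhnSum (N : ℕ) : ((Fin (n + 1) → Fin n → ℕ) → M) →+ M :=
  ∑ τ : Perm (Fin n), (Perm.sign τ : ℤ) •
    ∑ v ∈ baseCorners n N, Pi.evalAddMonoidHom (fun _ => M) (kuhnSimplex τ v)

lemma kuhnSum_apply (φ : (Fin (n + 1) → Fin n → ℕ) → M) :
    kuhnSum N φ = ∑ τ : Perm (Fin n), (Perm.sign τ : ℤ) •
      ∑ v ∈ baseCorners n N, φ (kuhnSimplex τ v) := by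
  simp [kuhnSum, AddMonoidHom.finsetSum_apply]

/-- The simplicial coboundary of a cochain `ψ` on tuples of points of `V`: the alternating sum of
`ψ` over the faces of a simplex. -/
def coboundary {V : Type*} (ψ : (Fin n → V) → M) (w : Fin (n + 1) → V) : M :=
  ∑ m : Fin (n + 1), (-1 : ℤ) ^ (m : ℕ) • ψ (m.removeNth w)

lemma kuhnSum_removeNth_castSucc_succ (ψ : (Fin (n + 1) → Fin (n + 1) → ℕ) → M) (k : Fin n) :
    kuhnSum N (fun w => ψ (k.succ.castSucc.removeNth w)) = 0 := by
  -- The two simplices that share an interior face have opposite orientations.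
  have hne : k.castSucc ≠ k.succ := Fin.castSucc_lt_succ.ne
  rw [kuhnSum_apply]
  refine sum_involution (fun τ _ => swap k.castSucc k.succ * τ) (fun τ _ => ?_)
    (fun τ _ _ h => hne (swap_eq_one_iff.mp (mul_eq_right.mp h)))
    (fun _ _ => mem_univ _) (fun τ _ => swap_mul_self_mul _ _ _)
  simp only [removeNth_castSucc_succ_kuhnSimplex_swap, Perm.sign_mul, Perm.sign_swap hne]
  simp

lemma kuhnSum_removeNth_zero (ψ : (Fin (n + 1) → Fin (n + 1) → ℕ) → M)
    (hψ : ∀ i a, (a = 0 ∨ a = N) → ∀ u, (∀ m, u m i = a) → ψ u = 0) :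
    kuhnSum N (fun w => ψ (Fin.removeNth 0 w)) =
      (-1 : ℤ) ^ n • kuhnSum N (fun w => ψ ((Fin.last _).removeNth w)) := by
  -- A face opposite a first vertex is opposite the last vertex of a simplex in an adjacent cube.
  rw [kuhnSum_apply, kuhnSum_apply, ← Equiv.sum_comp (Equiv.mulLeft (finRotate (n + 1))), smul_sum]
  refine sum_congr rfl fun τ _ => ?_
  have hface (a : ℕ) (ha : a = 0 ∨ a = N) (v : Fin (n + 1) → ℕ)
      (hv : v (τ.symm (Fin.last n)) = a) :
      ψ ((Fin.last _).removeNth (kuhnSimplex τ v)) = 0 :=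
    hψ _ a ha _ fun m => (removeNth_last_kuhnSimplex_apply τ v m).trans hv
  simp only [coe_mulLeft, removeNth_zero_kuhnSimplex_finRotate]
  rw [sum_baseCorners_add_single _ (fun v => ψ ((Fin.last _).removeNth (kuhnSimplex τ v)))
    (hface 0 (.inl rfl)) (hface N (.inr rfl)), smul_smul]
  simp

theorem kuhnSum_coboundary (ψ : (Fin (n + 1) → Fin (n + 1) → ℕ) → M)
    (hψ : ∀ i a, (a = 0 ∨ a = N) → ∀ u, (∀ m, u m i = a) → ψ u = 0) :
    kuhnSum N (coboundary ψ) = 0 := by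
  have hsum : coboundary ψ =
      ∑ m : Fin (n + 2), (-1 : ℤ) ^ (m : ℕ) • fun w => ψ (m.removeNth w) := by
    ext w
    simp [coboundary]
  have hinterior (k : Fin n) : kuhnSum N (fun w => ψ (k.castSucc.succ.removeNth w)) = 0 := by
    rw [Fin.succ_castSucc, kuhnSum_removeNth_castSucc_succ]
  simp only [hsum, map_sum, map_zsmul]
  rw [Fin.sum_univ_succ, Fin.sum_univ_castSucc, kuhnSum_removeNth_zero ψ hψ]
  simp [hinterior, pow_succ]

end KuhnTriangulation

section SignedVolume

variable {R : Type*} [CommRing R]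

lemma det_eq_zero_of_row_eq_smul {m : Type*} [Fintype m] [DecidableEq m] {A : Matrix m m R}
    {i j : m} (hij : i ≠ j) {c : R} (h : A j = c • A i) : A.det = 0 := by
  rw [← A.updateRow_eq_self j, h, Matrix.det_updateRow_smul, Matrix.det_updateRow_eq_zero hij,
    mul_zero]

variable {n N : ℕ} {V : Type*}

/-- The homogeneous coordinates of the images under `f` of a tuple of points `u`, used to write
volumes as determinants: each column is a `1` followed by the coordinates of one image point. -/
def homogeneousRows {k : ℕ} (f : Fin n → V → R) (u : Fin k → V) : Fin (n + 1) → Fin k → R :=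
  Fin.cons 1 fun i => f i ∘ u

/-- The signed volume of the image under `f` of the simplex `w`, normalized without the factor
`1 / n!` so that it makes sense over any commutative ring. -/
def signedVolume (f : Fin n → V → R) (w : Fin (n + 1) → V) : R :=
  Matrix.det (Matrix.of (homogeneousRows f w))

/-- The minor of `signedVolume f` at coordinate `k` and at the vertex opposite the face `u`, which
is the coefficient, up to sign, in the Laplace expansion along coordinate `k`. -/
def faceMinor (f : Fin n → V → R) (k : Fin n) (u : Fin n → V) : R :=
  Matrix.det (Matrix.of (k.succ.removeNth (homogeneousRows f u)))

lemma homogeneousRows_update {m : ℕ} (f : Fin n → V → R) (k : Fin n) (η : V → R) (u : Fin m → V) :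
    homogeneousRows (Function.update f k η) u =
      Function.update (homogeneousRows f u) k.succ (η ∘ u) := by
  rw [homogeneousRows, homogeneousRows, ← Fin.cons_update]
  congr 1
  exact (Function.comp_update (fun h : V → R => h ∘ u) f k η)

lemma homogeneousRows_removeNth {m : ℕ} (f : Fin n → V → R) (u : Fin (m + 1) → V) (l : Fin (m + 1))
    (r : Fin (n + 1)) (j : Fin m) :
    homogeneousRows f (l.removeNth u) r j = homogeneousRows f u r (l.succAbove j) := by
  cases r using Fin.cases <;> rfl

lemma signedVolume_eq_zero_of_comp_eq_const {f : Fin n → V → R} {w : Fin (n + 1) → V} {k : Fin n}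
    {c : R} (h : ∀ m, f k (w m) = c) : signedVolume f w = 0 :=
  det_eq_zero_of_row_eq_smul (Fin.succ_ne_zero k).symm (c := c) <| by
    ext m
    simp [homogeneousRows, h]

lemma signedVolume_update_add (f : Fin n → V → R) (k : Fin n) (α β : V → R) :
    signedVolume (Function.update f k (α + β)) =
      signedVolume (Function.update f k α) + signedVolume (Function.update f k β) := by
  ext w
  simp only [signedVolume, homogeneousRows_update, Pi.add_apply]
  exact Matrix.det_updateRow_add _ _ _ _

lemma signedVolume_update (f : Fin n → V → R) (k : Fin n) (η : V → R) (w : Fin (n + 1) → V) :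
    signedVolume (Function.update f k η) w =
      (-1) ^ (k + 1 : ℕ) * ∑ m : Fin (n + 1),
        (-1) ^ (m : ℕ) * (η (w m) * faceMinor f k (m.removeNth w)) := by
  rw [signedVolume, Matrix.det_succ_row _ k.succ, mul_sum]
  refine sum_congr rfl fun m _ => ?_
  have hminor : (Matrix.of (homogeneousRows (Function.update f k η) w)).submatrix
      k.succ.succAbove m.succAbove =
        Matrix.of (k.succ.removeNth (homogeneousRows f (m.removeNth w))) := by
    ext r j
    simp only [Matrix.submatrix_apply, Matrix.of_apply, homogeneousRows_update,
      Function.update_of_ne (Fin.succAbove_ne k.succ r), Fin.removeNth_apply,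
      homogeneousRows_removeNth]
  rw [hminor, homogeneousRows_update, Matrix.of_apply, Function.update_self, faceMinor,
    Function.comp_apply, Fin.val_succ]
  ring

lemma coboundary_faceMinor (f : Fin n → V → R) (k : Fin n) :
    coboundary (faceMinor f k) = 0 := by
  ext w
  have h : signedVolume (Function.update f k 1) w = 0 :=
    signedVolume_eq_zero_of_comp_eq_const (k := k) (c := 1) (by simp)
  rw [signedVolume_update] at h
  have hunit : IsUnit ((-1 : R) ^ (k + 1 : ℕ)) := isUnit_one.neg.pow _
  simpa [coboundary] using hunit.mul_right_eq_zero.mp h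

lemma signedVolume_update_eq_coboundary (f : Fin n → V → R) (k : Fin n) (η : V → R) :
    signedVolume (Function.update f k η) =
      (-1 : ℤ) ^ (k : ℕ) • coboundary fun u => (∑ j, η (u j)) * faceMinor f k u := by
  ext w
  -- As `faceMinor f k` is a cocycle, the factor `η (w m)` of its value at the face opposite `w m`
  -- can be replaced by minus the sum of `η` over that face, so each term depends on its face only.
  have hcocycle : ∑ m : Fin (n + 1), (-1) ^ (m : ℕ) * faceMinor f k (m.removeNth w) = 0 := by
    simpa [coboundary] using congrFun (coboundary_faceMinor f k) w
  have hsplit (m : Fin (n + 1)) : ∑ j, η (m.removeNth w j) = ∑ j, η (w j) - η (w m) := by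
    rw [Fin.sum_univ_succAbove _ m, add_sub_cancel_left]
    rfl
  calc signedVolume (Function.update f k η) w
      = (-1) ^ (k : ℕ) * ((∑ j, η (w j)) *
          ∑ m : Fin (n + 1), (-1) ^ (m : ℕ) * faceMinor f k (m.removeNth w) -
        ∑ m : Fin (n + 1), (-1) ^ (m : ℕ) * (η (w m) * faceMinor f k (m.removeNth w))) := by
        rw [signedVolume_update, hcocycle]
        ring
    _ = (-1) ^ (k : ℕ) * ∑ m : Fin (n + 1), (-1) ^ (m : ℕ) *
          ((∑ j, η (m.removeNth w j)) * faceMinor f k (m.removeNth w)) := by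
        rw [mul_sum _ _ (∑ j, η (w j)), ← sum_sub_distrib]
        refine congrArg _ (sum_congr rfl fun m _ => ?_)
        rw [hsplit]
        ring
    _ = _ := by simp [coboundary]

lemma faceMinor_eq_zero_of_comp_eq_const {f : Fin n → V → R} {k i : Fin n} (hik : i ≠ k)
    {u : Fin n → V} {c : R} (h : ∀ m, f i (u m) = c) : faceMinor f k u = 0 := by
  obtain ⟨r₀, hr₀⟩ := Fin.exists_succAbove_eq (Fin.succ_ne_zero k).symm
  obtain ⟨r₁, hr₁⟩ := Fin.exists_succAbove_eq ((Fin.succ_injective n).ne hik)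
  have hr : r₀ ≠ r₁ := by
    rintro rfl
    exact Fin.succ_ne_zero i (hr₁.symm.trans hr₀)
  refine det_eq_zero_of_row_eq_smul hr (c := c) ?_
  ext m
  simp [Fin.removeNth_apply, hr₀, hr₁, homogeneousRows, h]

lemma kuhnSum_signedVolume_update_eq_zero {f : Fin n → (Fin n → ℕ) → R} {k : Fin n}
    {η : (Fin n → ℕ) → R} (hf : ∀ i ≠ k, ∀ v, v i = 0 ∨ v i = N → f i v = v i)
    (hη : ∀ v, v k = 0 ∨ v k = N → η v = 0) :
    kuhnSum N (signedVolume (Function.update f k η)) = 0 := by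
  obtain _ | n := n
  · exact k.elim0
  rw [signedVolume_update_eq_coboundary, map_zsmul, kuhnSum_coboundary, smul_zero]
  intro i a ha u hu
  obtain rfl | hik := eq_or_ne i k
  · rw [sum_eq_zero fun m _ => hη _ (by rwa [hu m]), zero_mul]
  · have hfu (m : Fin (n + 1)) : f i (u m) = a := by rw [hf i hik _ (by rwa [hu m]), hu m]
    rw [faceMinor_eq_zero_of_comp_eq_const hik hfu, mul_zero]

theorem kuhnSum_signedVolume_eq {f : Fin n → (Fin n → ℕ) → R}
    (hf : ∀ i v, v i = 0 ∨ v i = N → f i v = v i) :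
    kuhnSum N (signedVolume f) = kuhnSum N (signedVolume fun i (v : Fin n → ℕ) => (v i : R)) := by
  set c : Fin n → (Fin n → ℕ) → R := fun i v => v i
  suffices h : ∀ s : Finset (Fin n),
      kuhnSum N (signedVolume (s.piecewise c f)) = kuhnSum N (signedVolume f) by
    simpa using (h univ).symm
  intro s
  induction s using Finset.induction_on with
  | empty => simp
  | insert k s hk ih =>
    have hfk : Function.update (s.piecewise c f) k (f k) = s.piecewise c f := by
      rw [Function.update_eq_self_iff, piecewise_eq_of_notMem _ _ _ hk]
    have hpiece : ∀ i ≠ k, ∀ v, v i = 0 ∨ v i = N → s.piecewise c f i v = v i := fun i _ v hv => by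
      by_cases hi : i ∈ s <;> simp [hi, c, hf i v hv]
    have hck : c k = f k + (c k - f k) := (add_sub_cancel _ _).symm
    rw [piecewise_insert, hck, signedVolume_update_add, map_add, hfk, ih,
      kuhnSum_signedVolume_update_eq_zero hpiece fun v hv => by simp [c, hf k v hv], add_zero]

lemma signedVolume_kuhnSimplex (τ : Perm (Fin n)) (v : Fin n → ℕ) :
    signedVolume (fun i (v : Fin n → ℕ) => (v i : R)) (kuhnSimplex τ v) = (Perm.sign τ : ℤ) := by
  let U : Matrix (Fin (n + 1)) (Fin (n + 1)) R := Matrix.of fun r m => if r ≤ m then 1 else 0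
  let σ : Perm (Fin (n + 1)) := Perm.decomposeFin.symm (0, τ)
  have hU : U.det = 1 := by
    rw [Matrix.det_of_isUpperTriangular fun i j hij => by
      simpa [U] using fun h => absurd h (not_le.mpr hij)]
    simp [U]
  calc signedVolume (fun i (v : Fin n → ℕ) => (v i : R)) (kuhnSimplex τ v)
      = (U.submatrix σ id).det := by
        refine Matrix.det_eq_of_forall_row_eq_smul_add_const (Fin.cons 0 fun i => (v i : R)) 0
          rfl fun r m => ?_
        cases r using Fin.cases with
        | zero => simp [homogeneousRows, U, σ]
        | succ i =>
          simp [homogeneousRows, U, σ, kuhnSimplex, add_comm, ← Fin.castSucc_lt_iff_succ_le]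
    _ = (Perm.sign τ : ℤ) := by simp [Matrix.det_permute, hU, σ]

lemma kuhnSum_signedVolume_coord :
    kuhnSum N (signedVolume fun i (v : Fin n → ℕ) => (v i : R)) = n.factorial * N ^ n := by
  have hsign (τ : Perm (Fin n)) : (Perm.sign τ : R) * (Perm.sign τ : R) = 1 := by
    exact_mod_cast congrArg (fun u : ℤˣ => ((u : ℤ) : R)) (Int.units_mul_self (Perm.sign τ))
  simp [kuhnSum_apply, signedVolume_kuhnSimplex, card_baseCorners, mul_left_comm _ (_ ^ _), hsign,
    Fintype.card_perm]

lemma exists_signedVolume_kuhnSimplex_ne_zero [CharZero R] [NoZeroDivisors R] (hN : N ≠ 0)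
    {f : Fin n → (Fin n → ℕ) → R} (hf : ∀ i v, v i = 0 ∨ v i = N → f i v = v i) :
    ∃ τ, ∃ v ∈ baseCorners n N, signedVolume f (kuhnSimplex τ v) ≠ 0 := by
  have hsum : kuhnSum N (signedVolume f) ≠ 0 := by
    rw [kuhnSum_signedVolume_eq hf, kuhnSum_signedVolume_coord]
    exact mul_ne_zero (Nat.cast_ne_zero.mpr n.factorial_ne_zero)
      (pow_ne_zero _ (Nat.cast_ne_zero.mpr hN))
  rw [kuhnSum_apply] at hsum
  obtain ⟨τ, -, hτ⟩ := exists_ne_zero_of_sum_ne_zero hsum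
  obtain ⟨v, hv, hvol⟩ := exists_ne_zero_of_sum_ne_zero (right_ne_zero_of_smul hτ)
  exact ⟨τ, v, hv, hvol⟩

theorem exists_kuhnSimplex_mem_and_notMem (hN : N ≠ 0) (S : Fin n → Set (Fin n → ℕ))
    (h₀ : ∀ i v, v i = 0 → v ∉ S i) (h₁ : ∀ i v, v i = N → v ∈ S i) :
    ∃ τ, ∃ v ∈ baseCorners n N, ∀ i,
      (∃ m, kuhnSimplex τ v m ∈ S i) ∧ ∃ m, kuhnSimplex τ v m ∉ S i := by
  let f : Fin n → (Fin n → ℕ) → ℤ := fun i => (S i).indicator fun _ => N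
  have hf (i v) (hv : v i = 0 ∨ v i = N) : f i v = v i := by
    obtain hv | hv := hv
    · simp [f, h₀ i v hv, hv]
    · simp [f, h₁ i v hv, hv]
  obtain ⟨τ, v, hv, hvol⟩ := exists_signedVolume_kuhnSimplex_ne_zero hN hf
  refine ⟨τ, v, hv, fun i => ⟨?_, ?_⟩⟩ <;> by_contra! h
  · exact hvol (signedVolume_eq_zero_of_comp_eq_const (k := i) (c := 0) fun m => by simp [f, h m])
  · exact hvol (signedVolume_eq_zero_of_comp_eq_const (k := i) (c := N) fun m => by simp [f, h m])

end SignedVolume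

section PoincareMiranda

/-- The point of the box `[L, U]` with grid coordinates `v`, when the box is divided into `N`
equal parts in each direction. -/
noncomputable def gridPoint {ι : Type*} (L U : ι → ℝ) (N : ℕ) (v : ι → ℕ) : ι → ℝ :=
  fun i => AffineMap.lineMap (L i) (U i) (v i / N : ℝ)

lemma gridPoint_mem_Icc {ι : Type*} {L U : ι → ℝ} (hLU : L ≤ U) {N : ℕ} {v : ι → ℕ}
    (hv : ∀ i, v i ≤ N) : gridPoint L U N v ∈ Set.Icc L U := by
  have hmem (i : ι) : gridPoint L U N v i ∈ Set.Icc (L i) (U i) := by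
    rw [← segment_eq_Icc (hLU i)]
    exact lineMap_mem_segment _ _ _
      ⟨by positivity, div_le_one_of_le₀ (Nat.cast_le.mpr (hv i)) (Nat.cast_nonneg N)⟩
  exact ⟨fun i => (hmem i).1, fun i => (hmem i).2⟩

lemma dist_gridPoint_le {ι : Type*} [Fintype ι] (L U : ι → ℝ) {N : ℕ} {v w : ι → ℕ} (hvw : v ≤ w)
    (hwv : w ≤ v + 1) : dist (gridPoint L U N v) (gridPoint L U N w) ≤ dist L U / N := by
  refine (dist_pi_le_iff (by positivity)).mpr fun i => ?_
  have hstep : dist (v i / N : ℝ) (w i / N) ≤ 1 / N := by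
    have h₁ : (v i : ℝ) ≤ w i := Nat.cast_le.mpr (hvw i)
    have h₂ : (w i : ℝ) ≤ v i + 1 := by exact_mod_cast hwv i
    rw [Real.dist_eq, ← sub_div, abs_div, Nat.abs_cast, abs_sub_comm, abs_of_nonneg (by linarith)]
    gcongr
    linarith
  calc dist (gridPoint L U N v i) (gridPoint L U N w i)
      = dist (v i / N : ℝ) (w i / N) * dist (L i) (U i) := dist_lineMap_lineMap _ _ _ _
    _ ≤ 1 / N * dist L U := by gcongr; exact dist_le_pi_dist L U i
    _ = dist L U / N := by ring

variable {n : ℕ} {L U : Fin n → ℝ}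

lemma exists_forall_dist_lt_of_cover (hLU : L ≤ U) {A B : Fin n → Set (Fin n → ℝ)}
    (hA : ∀ i, ∀ x ∈ Set.Icc L U, x i = L i → x ∈ A i)
    (hB : ∀ i, ∀ x ∈ Set.Icc L U, x i = U i → x ∈ B i)
    (hAB : ∀ i, Set.Icc L U ⊆ A i ∪ B i) {δ : ℝ} (hδ : 0 < δ) :
    ∃ x ∈ Set.Icc L U, ∀ i, (∃ y ∈ Set.Icc L U ∩ A i, dist x y < δ) ∧
      ∃ z ∈ Set.Icc L U ∩ B i, dist x z < δ := by
  obtain ⟨N, hN⟩ := exists_nat_gt (dist L U / δ)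
  have hN₀ : (0 : ℝ) < N := lt_of_le_of_lt (by positivity) hN
  -- The faces are read off the grid coordinates, which tell them apart even where `L i = U i`.
  let S (i : Fin n) : Set (Fin n → ℕ) := {v | v i = N ∨ v i ≠ 0 ∧ gridPoint L U N v ∉ A i}
  obtain ⟨τ, v, hv, hS⟩ := exists_kuhnSimplex_mem_and_notMem (Nat.cast_pos.mp hN₀).ne' S
    (fun i v hvi => by simp [S, hvi, (Nat.cast_pos.mp hN₀).ne]) fun i v hvi => .inl hvi
  rw [mem_baseCorners] at hv
  have hle (m : Fin (n + 1)) (i : Fin n) : kuhnSimplex τ v m i ≤ N :=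
    (kuhnSimplex_le τ v m i).trans (hv i)
  have hmem (m : Fin (n + 1)) := gridPoint_mem_Icc hLU (hle m)
  have hdist (m : Fin (n + 1)) :
      dist (gridPoint L U N v) (gridPoint L U N (kuhnSimplex τ v m)) < δ :=
    (dist_gridPoint_le L U (le_kuhnSimplex τ v m) (kuhnSimplex_le τ v m)).trans_lt
      ((div_lt_comm₀ hδ hN₀).mp hN)
  refine ⟨gridPoint L U N v, gridPoint_mem_Icc hLU fun i => (hv i).le, fun i => ?_⟩
  obtain ⟨⟨b, hb⟩, a, ha⟩ := hS i
  refine ⟨⟨_, ⟨hmem a, ?_⟩, hdist a⟩, _, ⟨hmem b, ?_⟩, hdist b⟩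
  · by_cases ha₀ : kuhnSimplex τ v a i = 0
    · exact hA i _ (hmem a) (by simp [gridPoint, ha₀])
    · by_contra hnot
      exact ha (.inr ⟨ha₀, hnot⟩)
  · obtain hb | ⟨-, hb⟩ := hb
    · exact hB i _ (hmem b) (by simp [gridPoint, hb, hN₀.ne'])
    · exact (hAB i (hmem b)).resolve_left hb

lemma exists_norm_lt_of_sign_on_faces (hLU : L ≤ U) {g : (Fin n → ℝ) → Fin n → ℝ}
    (hg : ContinuousOn g (Set.Icc L U))
    (hL : ∀ i, ∀ x ∈ Set.Icc L U, x i = L i → g x i ≤ 0)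
    (hU : ∀ i, ∀ x ∈ Set.Icc L U, x i = U i → 0 ≤ g x i) {ε : ℝ} (hε : 0 < ε) :
    ∃ x ∈ Set.Icc L U, ‖g x‖ < ε := by
  obtain ⟨δ, hδ, hunif⟩ := Metric.uniformContinuousOn_iff.mp
    (isCompact_Icc.uniformContinuousOn_of_continuous hg) ε hε
  obtain ⟨x, hx, hnear⟩ := exists_forall_dist_lt_of_cover hLU
    (A := fun i => {x | g x i ≤ 0}) (B := fun i => {x | 0 ≤ g x i}) hL hU
    (fun i x _ => le_total (g x i) 0) hδ
  refine ⟨x, hx, (pi_norm_lt_iff hε).mpr fun i => ?_⟩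
  have hclose (y : Fin n → ℝ) (hy : y ∈ Set.Icc L U) (hxy : dist x y < δ) : |g x i - g y i| < ε :=
    (dist_le_pi_dist (g x) (g y) i).trans_lt (hunif x hx y hy hxy)
  obtain ⟨⟨y, ⟨hy, hgy : g y i ≤ 0⟩, hxy⟩, z, ⟨hz, hgz : 0 ≤ g z i⟩, hxz⟩ := hnear i
  have hupper := abs_lt.mp (hclose y hy hxy)
  have hlower := abs_lt.mp (hclose z hz hxz)
  exact abs_lt.mpr ⟨by linarith, by linarith⟩

lemma exists_eq_zero_of_sign_on_faces_fin (hLU : L ≤ U) {g : (Fin n → ℝ) → Fin n → ℝ}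
    (hg : ContinuousOn g (Set.Icc L U))
    (hL : ∀ i, ∀ x ∈ Set.Icc L U, x i = L i → g x i ≤ 0)
    (hU : ∀ i, ∀ x ∈ Set.Icc L U, x i = U i → 0 ≤ g x i) :
    ∃ x ∈ Set.Icc L U, g x = 0 := by
  obtain ⟨x, hx, hmin⟩ := isCompact_Icc.exists_isMinOn (Set.nonempty_Icc.mpr hLU) hg.norm
  refine ⟨x, hx, ?_⟩
  by_contra hne
  obtain ⟨y, hy, hlt⟩ := exists_norm_lt_of_sign_on_faces hLU hg hL hU (norm_pos_iff.mpr hne)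
  exact (hmin hy).not_gt hlt

theorem poincare_miranda {ι : Type*} [Finite ι] {L U : ι → ℝ} (hLU : L ≤ U)
    {g : (ι → ℝ) → ι → ℝ} (hg : ContinuousOn g (Set.Icc L U))
    (hL : ∀ i, ∀ x ∈ Set.Icc L U, x i = L i → g x i ≤ 0)
    (hU : ∀ i, ∀ x ∈ Set.Icc L U, x i = U i → 0 ≤ g x i) :
    ∃ x ∈ Set.Icc L U, g x = 0 := by
  obtain ⟨n, ⟨e⟩⟩ := Finite.exists_equiv_fin ι
  have hmem {x : Fin n → ℝ} (hx : x ∈ Set.Icc (L ∘ e.symm) (U ∘ e.symm)) :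
      x ∘ e ∈ Set.Icc L U :=
    ⟨fun i => by simpa using hx.1 (e i), fun i => by simpa using hx.2 (e i)⟩
  have hcont : ContinuousOn (fun x => g (x ∘ e) ∘ e.symm)
      (Set.Icc (L ∘ e.symm) (U ∘ e.symm)) := by
    have hcomp : ContinuousOn (fun x : Fin n → ℝ => g (x ∘ e))
        (Set.Icc (L ∘ e.symm) (U ∘ e.symm)) :=
      hg.comp (by fun_prop) fun _ => hmem
    exact continuousOn_pi.mpr fun k => continuousOn_pi.mp hcomp (e.symm k)
  obtain ⟨x, hx, hgx⟩ := exists_eq_zero_of_sign_on_faces_fin (fun k => hLU (e.symm k)) hcont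
    (fun k x hx hxk => hL _ _ (hmem hx) (by simpa using hxk))
    (fun k x hx hxk => hU _ _ (hmem hx) (by simpa using hxk))
  exact ⟨x ∘ e, hmem hx, funext fun i => by simpa using congrFun hgx (e i)⟩

end PoincareMiranda

theorem stmt7_general {ι : Type*} [Finite ι] [DecidableEq ι] {L U : ι → ℝ} (hLU : L ≤ U)
    {g : (ι → ℝ) → ι → ℝ} (hg : ContinuousOn g (Set.Icc L U))
    (hmono : ∀ i, ∀ x ∈ Set.Icc L U, ∀ y ∈ Set.Icc L U, x ≤ y → x i = y i → g x i ≤ g y i)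
    (hL : ∀ i, g (Function.update U i (L i)) i ≤ 0)
    (hU : ∀ i, 0 ≤ g (Function.update L i (U i)) i) :
    ∃ x ∈ Set.Icc L U, g x = 0 := by
  have hcornerL (i : ι) : Function.update U i (L i) ∈ Set.Icc L U :=
    ⟨le_update_iff.mpr ⟨le_rfl, fun j _ => hLU j⟩, update_le_self_iff.mpr (hLU i)⟩
  have hcornerU (i : ι) : Function.update L i (U i) ∈ Set.Icc L U :=
    ⟨le_update_self_iff.mpr (hLU i), update_le_iff.mpr ⟨le_rfl, fun j _ => hLU j⟩⟩
  refine poincare_miranda hLU hg (fun i x hx hxi => ?_) fun i x hx hxi => ?_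
  · have hle : x ≤ Function.update U i (L i) := le_update_iff.mpr ⟨hxi.le, fun j _ => hx.2 j⟩
    exact (hmono i x hx _ (hcornerL i) hle (by simpa using hxi)).trans (hL i)
  · have hle : Function.update L i (U i) ≤ x := update_le_iff.mpr ⟨hxi.ge, fun j _ => hx.1 j⟩
    exact (hU i).trans (hmono i _ (hcornerU i) x hx hle (by simpa using hxi.symm))

/-- Abstract Poincaré–Miranda-type lemma with monotonicity: a
continuous, coordinatewise-monotone map `g` on a box `Λ ⊆ ℝ^q` whose components
have the appropriate signs at `2q` corner points has a zero in `Λ`. -/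
theorem stmt7 {q : ℕ} (hq : 0 < q)
    (lamL lamU : Fin q → ℝ) (hle : lamL ≤ lamU)
    (Lam : Set (Fin q → ℝ)) (hLam : Lam = {lam | lamL ≤ lam ∧ lam ≤ lamU})
    (g : (Fin q → ℝ) → Fin q → ℝ)
    (hcont : ContinuousOn g Lam)
    (hmono : ∀ lam ∈ Lam, ∀ mu ∈ Lam, lam ≤ mu → g lam ≤ g mu)
    (hsign : ∀ i : Fin q,
      g (fun j => if j = i then lamL i else lamU j) i ≤ 0 ∧
      0 ≤ g (fun j => if j = i then lamU i else lamL j) i) :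
    ∃ lamStar ∈ Lam, g lamStar = 0 := by
  subst hLam
  simp only [← Function.update_apply] at hsign
  exact stmt7_general hle hcont (fun i x hx y hy hxy _ => hmono x hx y hy hxy i)
    (fun i => (hsign i).1) fun i => (hsign i).2
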